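/- Let f : ℝ² → ℝ be representable as a difference of two convex functions, i.e. f = f₁ − f₂ with f₁, f₂ : ℝ² → ℝ convex, and set Φ(t) = f(cos t, sin t) for t ∈ [0, 2π]. Then there exists a constant c(f) > 0 such that ∨(Φ'; 0, 2π) ≤ c(f). -/

import Mathlib

/-!
The proof rests on one observation: if `g : ℝ² → ℝ` is convex, then `t ↦ g (cos t, sin t)` is
semiconvex, i.e. it becomes convex on `ℝ` after adding `C t²` for `C` large
(`exists_convexOn_circle`). Indeed `g` is `K`-Lipschitz on the closed unit disc, and the point of
the circle at parameter `a x + b y` differs from the corresponding chord point by at most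
`a b (x - y)²` (`norm_chord_le`), which is exactly the convexity gap of `t ↦ t²`.

Using the same `C` for `f₁` and `f₂`, the quadratic terms cancel and `Φ` is a difference
`g₁ - g₂` of two convex functions on `ℝ`. At a point of differentiability of `Φ`, the derivative
is the difference of the right derivatives of `g₁` and `g₂`, which exist everywhere and are monotone
(`g₁` and `g₂` themselves need not be differentiable there). Hence each variation sum telescopes and
is bounded by the total increase of the two right derivatives on `[0, 2π]`.
-/

open Set
open scoped ENNReal NNReal

noncomputable section

/-- Variation of the derivative of `f` on `[a,b]`: supremum, over finite increasing
sequences of points of `[a,b]` at which `f` is differentiable, of the sums of norms of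
consecutive differences of derivatives. -/
def derivVariation {E : Type*} [NormedAddCommGroup E] [NormedSpace ℝ E]
    (f : ℝ → E) (a b : ℝ) : ℝ≥0∞ :=
  ⨆ (N : ℕ) (t : Fin (N + 1) → ℝ) (_ : StrictMono t)
    (_ : ∀ i, t i ∈ Set.Icc a b ∧ DifferentiableAt ℝ f (t i)),
    ∑ i : Fin N, ENNReal.ofReal ‖deriv f (t i.succ) - deriv f (t i.castSucc)‖

/-- The point `(cos t, sin t)` on the unit circle of the Euclidean plane. -/
def circlePt (t : ℝ) : EuclideanSpace ℝ (Fin 2) :=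
  (WithLp.equiv 2 (Fin 2 → ℝ)).symm ![Real.cos t, Real.sin t]

/-- The phase `c` covers `cos`, `-cos`, `sin` and `-sin` at once; convexity of `x² / 2 ± cos x` and
`x² / 2 ± sin x` bounds both coordinates of the arc-to-chord displacement. -/
lemma convexOn_sq_add_cos (c : ℝ) :
    ConvexOn ℝ univ (fun x : ℝ => x ^ 2 / 2 + Real.cos (x + c)) := by
  have h1 : ∀ x, HasDerivAt (fun x : ℝ => x ^ 2 / 2 + Real.cos (x + c))
      (x - Real.sin (x + c)) x := by
    intro x
    have := (((hasDerivAt_id x).pow 2).div_const 2).add ((hasDerivAt_id x).add_const c).cos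
    refine (this.congr_deriv ?_)
    simp
    ring
  have h2 : ∀ x, HasDerivAt (fun x : ℝ => x - Real.sin (x + c)) (1 - Real.cos (x + c)) x := by
    intro x
    have := (hasDerivAt_id x).sub ((hasDerivAt_id x).add_const c).sin
    refine (this.congr_deriv ?_)
    simp
  have hd : deriv (fun x : ℝ => x ^ 2 / 2 + Real.cos (x + c)) = fun x => x - Real.sin (x + c) :=
    funext fun x => (h1 x).deriv
  refine Monotone.convexOn_univ_of_deriv (fun x => (h1 x).differentiableAt) ?_
  rw [hd]
  refine monotone_of_deriv_nonneg (fun x => (h2 x).differentiableAt) fun x => ?_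
  rw [(h2 x).deriv]
  linarith [Real.cos_le_one (x + c)]

lemma cos_chord_le (c x y a b : ℝ) (ha : 0 ≤ a) (hb : 0 ≤ b) (hab : a + b = 1) :
    Real.cos (a * x + b * y + c) - (a * Real.cos (x + c) + b * Real.cos (y + c))
      ≤ a * b * (x - y) ^ 2 / 2 := by
  have h := (convexOn_sq_add_cos c).2 (mem_univ x) (mem_univ y) ha hb hab
  simp only [smul_eq_mul] at h
  obtain rfl : b = 1 - a := by linarith
  nlinarith [h]

/-- The distance from the circle point to the chord point is at most the convexity gap
`a x² + b y² - (a x + b y)² = a b (x - y)²` of the square. -/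
lemma norm_chord_le (x y a b : ℝ) (ha : 0 ≤ a) (hb : 0 ≤ b) (hab : a + b = 1) :
    ‖circlePt (a * x + b * y) - (a • circlePt x + b • circlePt y)‖ ≤ a * b * (x - y) ^ 2 := by
  set v := circlePt (a * x + b * y) - (a • circlePt x + b • circlePt y) with hv
  have e0 : v 0 = Real.cos (a * x + b * y) - (a * Real.cos x + b * Real.cos y) := by
    simp [hv, circlePt]
  have e1 : v 1 = Real.sin (a * x + b * y) - (a * Real.sin x + b * Real.sin y) := by
    simp [hv, circlePt]
  -- the four phases give upper bounds for `cos`, `-cos`, `-sin` and `sin`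
  have c0 := cos_chord_le 0 x y a b ha hb hab
  have c1 := cos_chord_le Real.pi x y a b ha hb hab
  have c2 := cos_chord_le (Real.pi / 2) x y a b ha hb hab
  have c3 := cos_chord_le (-(Real.pi / 2)) x y a b ha hb hab
  simp only [add_zero, Real.cos_add_pi, Real.cos_add_pi_div_two, ← sub_eq_add_neg,
    Real.cos_sub_pi_div_two] at c0 c1 c2 c3
  have a0 : |v 0| ≤ a * b * (x - y) ^ 2 / 2 := by
    rw [e0, abs_le]; constructor <;> linarith
  have a1 : |v 1| ≤ a * b * (x - y) ^ 2 / 2 := by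
    rw [e1, abs_le]; constructor <;> linarith
  have hn : ‖v‖ ≤ |v 0| + |v 1| := by
    rw [EuclideanSpace.norm_eq, Fin.sum_univ_two, Real.sqrt_le_left (by positivity)]
    simp only [Real.norm_eq_abs]
    nlinarith [mul_nonneg (abs_nonneg (v 0)) (abs_nonneg (v 1))]
  linarith

lemma norm_circlePt (t : ℝ) : ‖circlePt t‖ = 1 := by
  simp [EuclideanSpace.norm_eq, Fin.sum_univ_two, circlePt]

/-- A convex function restricted to the unit circle is semiconvex in the angle. The bound holds for
all large `C`, so that one constant serves several functions. -/
lemma exists_convexOn_circle (g : EuclideanSpace ℝ (Fin 2) → ℝ) (hg : ConvexOn ℝ univ g) :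
    ∃ K : ℝ, ∀ C, K ≤ C → ConvexOn ℝ univ (fun t : ℝ => g (circlePt t) + C * t ^ 2) := by
  obtain ⟨K, hK⟩ := LocallyLipschitzOn.exists_lipschitzOnWith_of_compact
    (isCompact_closedBall (0 : EuclideanSpace ℝ (Fin 2)) 1)
    (hg.locallyLipschitz.locallyLipschitzOn (s := Metric.closedBall 0 1))
  refine ⟨K, fun C hC => ⟨convex_univ, fun x _ y _ a b ha hb hab => ?_⟩⟩
  have hmem : ∀ t, circlePt t ∈ Metric.closedBall (0 : EuclideanSpace ℝ (Fin 2)) 1 := fun t => by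
    simp [norm_circlePt]
  have hchord := (convex_closedBall (0 : EuclideanSpace ℝ (Fin 2)) 1) (hmem x) (hmem y) ha hb hab
  have h1 := hK.dist_le_mul _ (hmem (a * x + b * y)) _ hchord
  rw [Real.dist_eq, dist_eq_norm] at h1
  have h2 := hg.2 (mem_univ (circlePt x)) (mem_univ (circlePt y)) ha hb hab
  have h3 := mul_le_mul_of_nonneg_left (norm_chord_le x y a b ha hb hab) K.coe_nonneg
  have h4 : (K : ℝ) * (a * b * (x - y) ^ 2) ≤ C * (a * b * (x - y) ^ 2) :=
    mul_le_mul_of_nonneg_right hC (by positivity)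
  have h5 := (le_abs_self _).trans h1
  simp only [smul_eq_mul] at h2 ⊢
  have h6 : C * (a * b * (x - y) ^ 2) = a * (C * x ^ 2) + b * (C * y ^ 2)
      - C * (a * x + b * y) ^ 2 := by
    obtain rfl : b = 1 - a := by linarith
    ring
  have h7 := h5.trans (h3.trans h4)
  rw [h6] at h7
  linarith

lemma monotone_rightDeriv {g : ℝ → ℝ} (hg : ConvexOn ℝ univ g) :
    Monotone (fun x => derivWithin g (Ioi x) x) := by
  have := hg.monotoneOn_rightDeriv
  rwa [interior_univ, monotoneOn_univ] at this

lemma sum_succ_sub_castSucc (N : ℕ) (u : Fin (N + 1) → ℝ) :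
    ∑ i : Fin N, (u i.succ - u i.castSucc) = u (Fin.last N) - u 0 := by
  induction N with
  | zero => simp
  | succ n ih =>
    rw [Fin.sum_univ_castSucc]
    have := ih (fun i => u i.castSucc)
    simp only [Fin.succ_castSucc, Fin.succ_last, Fin.castSucc_zero] at this ⊢
    rw [this]
    ring

/-- For a difference of convex functions on `ℝ`, the variation of the derivative on `[a, b]` is at
most the total increase of the two right derivatives. -/
lemma derivVariation_sub_le {g₁ g₂ : ℝ → ℝ} (h₁ : ConvexOn ℝ univ g₁) (h₂ : ConvexOn ℝ univ g₂)
    (a b : ℝ) :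
    derivVariation (fun t => g₁ t - g₂ t) a b ≤ ENNReal.ofReal
      ((derivWithin g₁ (Ioi b) b - derivWithin g₁ (Ioi a) a) +
        (derivWithin g₂ (Ioi b) b - derivWithin g₂ (Ioi a) a)) := by
  have m₁ := monotone_rightDeriv h₁
  have m₂ := monotone_rightDeriv h₂
  set r₁ := fun x => derivWithin g₁ (Ioi x) x with hr₁
  set r₂ := fun x => derivWithin g₂ (Ioi x) x with hr₂
  change _ ≤ ENNReal.ofReal ((r₁ b - r₁ a) + (r₂ b - r₂ a))
  have hd : ∀ t, DifferentiableAt ℝ (fun t => g₁ t - g₂ t) t →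
      deriv (fun t => g₁ t - g₂ t) t = r₁ t - r₂ t := by
    intro t ht
    have d₁ := h₁.hasDerivWithinAt_rightDeriv_of_mem_interior (x := t) (by simp)
    have d₂ := h₂.hasDerivWithinAt_rightDeriv_of_mem_interior (x := t) (by simp)
    exact (uniqueDiffWithinAt_Ioi t).eq_deriv _ ht.hasDerivAt.hasDerivWithinAt (d₁.sub d₂)
  refine iSup_le fun N => iSup_le fun t => iSup_le fun htm => iSup_le fun ht => ?_
  rw [← ENNReal.ofReal_sum_of_nonneg fun i _ => norm_nonneg _]
  refine ENNReal.ofReal_le_ofReal ?_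
  calc ∑ i : Fin N, ‖deriv (fun t => g₁ t - g₂ t) (t i.succ)
          - deriv (fun t => g₁ t - g₂ t) (t i.castSucc)‖
      ≤ ∑ i : Fin N, ((r₁ (t i.succ) + r₂ (t i.succ))
          - (r₁ (t i.castSucc) + r₂ (t i.castSucc))) := by
        refine Finset.sum_le_sum fun i _ => ?_
        rw [hd _ (ht _).2, hd _ (ht _).2, Real.norm_eq_abs, abs_le]
        have hle : t i.castSucc ≤ t i.succ := htm.monotone i.castSucc_lt_succ.le
        have := m₁ hle
        have := m₂ hle
        constructor <;> linarith
    _ = (r₁ (t (Fin.last N)) + r₂ (t (Fin.last N))) - (r₁ (t 0) + r₂ (t 0)) :=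
        sum_succ_sub_castSucc N fun i => r₁ (t i) + r₂ (t i)
    _ ≤ _ := by
        linarith [m₁ (ht (Fin.last N)).1.2, m₂ (ht (Fin.last N)).1.2,
          m₁ (ht 0).1.1, m₂ (ht 0).1.1]

/-- for a function `f : ℝ² → ℝ` that is a difference of two convex functions,
the variation of `Φ'` on `[0, 2π]` is bounded, where `Φ(t) = f(cos t, sin t)`. -/
theorem derivVariation_le_of_dc
    (f f₁ f₂ : EuclideanSpace ℝ (Fin 2) → ℝ)
    (h₁ : ConvexOn ℝ Set.univ f₁) (h₂ : ConvexOn ℝ Set.univ f₂)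
    (hf : f = f₁ - f₂) :
    ∃ c : ℝ, 0 < c ∧
      derivVariation (fun t => f (circlePt t)) 0 (2 * Real.pi) ≤ ENNReal.ofReal c := by
  obtain ⟨K₁, hK₁⟩ := exists_convexOn_circle f₁ h₁
  obtain ⟨K₂, hK₂⟩ := exists_convexOn_circle f₂ h₂
  have key := derivVariation_sub_le (hK₁ _ (le_max_left K₁ K₂)) (hK₂ _ (le_max_right K₁ K₂))
    0 (2 * Real.pi)
  have he : (fun t => f (circlePt t)) = fun t =>
      (f₁ (circlePt t) + max K₁ K₂ * t ^ 2) - (f₂ (circlePt t) + max K₁ K₂ * t ^ 2) := by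
    funext t
    simp [hf]
  rw [he]
  exact ⟨max 1 _, lt_max_of_lt_left one_pos,
    key.trans (ENNReal.ofReal_le_ofReal (le_max_right _ _))⟩
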